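/- (Surjectivity up to denominators in the magic of potions.) With A, f = {a_i}_{i∈I}, g = {b_j}_{j∈J}, the relevance and divisor-closedness hypotheses on f, the chosen data n_j, ν_j⁺, ν_j⁻ and elements z_j ∈ A_{(f)} as in the magic of potions, and the canonical ring homomorphism χ : A_{(f)} → A_{(f∪g)}: for every w ∈ A_{(f∪g)} there exist z ∈ A_{(f)} and a finitely supported k : J → ℕ such that w · χ(∏_j z_j^{k_j}) = χ(z). -/

import Mathlib

/-!
Statement 7 (Surjectivity up to denominators in the magic of potions): with the data
of the magic of potions (`f` relevant and divisor-closed, elements `z j ∈ A_{(f)}`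
with value `(b_j ^ n_j * ∏ᵢ aᵢ ^ ν_j⁻ i) / (∏ᵢ aᵢ ^ ν_j⁺ i)`), every
`w ∈ A_{(f∪g)}` satisfies `w * χ (∏ⱼ z_j ^ k_j) = χ z` for some `z ∈ A_{(f)}` and
some finitely supported `k : J → ℕ`.
-/

/-- The set of degrees of homogeneous divisors of members of the family `f`. -/
def divisorDegrees {M A I : Type*} [AddCommGroup M] [CommRing A]
    (𝒜 : M → Submodule ℤ A) (f : I → A) : Set M :=
  {m | ∃ x : A, x ≠ 0 ∧ x ∈ 𝒜 m ∧ ∃ i, x ∣ f i}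

/-- A family `f` of homogeneous elements of an `M`-graded ring is *relevant* if every
`x ∈ M` has a positive multiple lying in the subgroup of `M` generated by the degrees
of the homogeneous divisors of members of `f`. -/
def IsRelevant {M A I : Type*} [AddCommGroup M] [CommRing A]
    (𝒜 : M → Submodule ℤ A) (f : I → A) : Prop :=
  ∀ x : M, ∃ n : ℕ, 0 < n ∧ n • x ∈ AddSubgroup.closure (divisorDegrees 𝒜 f)

/-- A product of powers of members of a family `f` belongs to the multiplicative
submonoid generated by `f`. -/
theorem prodPow_mem_closure {A I : Type*} [CommRing A] (f : I → A) (θ : I →₀ ℕ) :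
    (∏ i ∈ θ.support, f i ^ θ i) ∈ Submonoid.closure (Set.range f) :=
  Submonoid.prod_mem _ fun i _ =>
    Submonoid.pow_mem _ (Submonoid.subset_closure (Set.mem_range_self i)) _

/-- The canonical ring homomorphism between localizations of the same ring at two
nested submonoids `S ≤ T`. -/
noncomputable def locMap {A : Type*} [CommRing A] {S T : Submonoid A} (h : S ≤ T) :
    Localization S →+* Localization T :=
  IsLocalization.map (Localization T) (RingHom.id A)
    (show S ≤ Submonoid.comap (RingHom.id A) T from h)

theorem prodPow_mem_deg {M A I : Type*} [AddCommGroup M] [DecidableEq M] [CommRing A]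
    (𝒜 : M → Submodule ℤ A) [GradedRing 𝒜] (f : I → A) (d : I → M)
    (hfd : ∀ i, f i ∈ 𝒜 (d i)) (θ : I →₀ ℕ) :
    (∏ i ∈ θ.support, f i ^ θ i) ∈ 𝒜 (θ.sum fun i c => c • d i) :=
  SetLike.prod_mem_graded _ _ _ fun i _ => SetLike.pow_mem_graded _ (hfd i)

theorem locMap_mk {A : Type*} [CommRing A] {S T : Submonoid A} (h : S ≤ T) (a : A) (s : S) :
    locMap h (Localization.mk a s) = Localization.mk a ⟨s, h s.2⟩ := by
  rw [locMap, Localization.mk_eq_mk', IsLocalization.map_mk', Localization.mk_eq_mk']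
  rfl

theorem clear_denominator
    {M A I J : Type*} [AddCommGroup M] [DecidableEq M] [CommRing A]
    (𝒜 : M → Submodule ℤ A) [GradedRing 𝒜]
    (f : I → A) (d : I → M) (g : J → A) (e : J → M)
    (hfd : ∀ i, f i ∈ 𝒜 (d i)) (hge : ∀ j, g j ∈ 𝒜 (e j))
    (n : J → ℕ) (hn : ∀ j, 0 < n j) (νp νm : J → I →₀ ℕ)
    (hdeg : ∀ j, n j • e j + ((νm j).sum fun i c => c • d i)
      = (νp j).sum fun i c => c • d i)
    (z : J → HomogeneousLocalization 𝒜 (Submonoid.closure (Set.range f)))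
    (hz : ∀ j, (z j).val =
      Localization.mk (g j ^ n j * ∏ i ∈ (νm j).support, f i ^ (νm j) i)
        ⟨∏ i ∈ (νp j).support, f i ^ (νp j) i, prodPow_mem_closure f (νp j)⟩)
    (t : A) (ht : t ∈ Submonoid.closure (Set.range f ∪ Set.range g)) :
    ∃ (k : J →₀ ℕ) (δ ε : M) (c : A) (s : Submonoid.closure (Set.range f)),
      t ∈ 𝒜 δ ∧ c ∈ 𝒜 ε ∧ (s : A) ∈ 𝒜 (δ + ε) ∧
      (k.prod fun j c => z j ^ c).val = Localization.mk (t * c) s := by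
  induction ht using Submonoid.closure_induction with
  | mem x hx =>
    rcases hx with ⟨i, rfl⟩ | ⟨j, rfl⟩
    · refine ⟨0, d i, 0, 1, ⟨f i, Submonoid.subset_closure ⟨i, rfl⟩⟩, hfd i,
        SetLike.one_mem_graded _, by simpa using hfd i, ?_⟩
      rw [Finsupp.prod_zero_index, HomogeneousLocalization.val_one, mul_one]
      exact (Localization.mk_self
        (⟨f i, Submonoid.subset_closure ⟨i, rfl⟩⟩ : Submonoid.closure (Set.range f))).symm
    · refine ⟨Finsupp.single j 1, e j, (n j - 1) • e j + ((νm j).sum fun i c => c • d i),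
        g j ^ (n j - 1) * ∏ i ∈ (νm j).support, f i ^ (νm j) i,
        ⟨∏ i ∈ (νp j).support, f i ^ (νp j) i, prodPow_mem_closure f (νp j)⟩, hge j,
        SetLike.mul_mem_graded (SetLike.pow_mem_graded _ (hge j))
          (prodPow_mem_deg 𝒜 f d hfd _), ?_, ?_⟩
      · have h : e j + ((n j - 1) • e j + ((νm j).sum fun i c => c • d i)) =
            (νp j).sum fun i c => c • d i := by
          rw [← add_assoc, ← succ_nsmul', Nat.sub_add_cancel (hn j), hdeg]
        rw [h]
        exact prodPow_mem_deg 𝒜 f d hfd _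
      · rw [Finsupp.prod_single_index (h := fun j c => z j ^ c) (pow_zero _), pow_one, hz, ← mul_assoc, ← pow_succ',
          Nat.sub_add_cancel (hn j)]
  | one =>
    refine ⟨0, 0, 0, 1, 1, SetLike.one_mem_graded _, SetLike.one_mem_graded _,
      by simpa using SetLike.one_mem_graded 𝒜, ?_⟩
    rw [Finsupp.prod_zero_index, HomogeneousLocalization.val_one, mul_one, Localization.mk_one]
  | mul x y _ _ hx hy =>
    obtain ⟨k, δ, ε, c, s, h1, h2, h3, h4⟩ := hx
    obtain ⟨k', δ', ε', c', s', h1', h2', h3', h4'⟩ := hy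
    refine ⟨k + k', δ + δ', ε + ε', c * c', s * s', SetLike.mul_mem_graded h1 h1',
      SetLike.mul_mem_graded h2 h2', ?_, ?_⟩
    · rw [add_add_add_comm]
      exact SetLike.mul_mem_graded h3 h3'
    · classical
      rw [Finsupp.prod_add_index' (fun _ => pow_zero _) (fun _ _ _ => pow_add _ _ _),
        HomogeneousLocalization.val_mul, h4, h4', Localization.mk_mul, mul_mul_mul_comm]

theorem magic_of_potions_surjectivity
    {M A I J : Type*} [AddCommGroup M] [DecidableEq M] [CommRing A]
    (𝒜 : M → Submodule ℤ A) [GradedRing 𝒜]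
    (f : I → A) (d : I → M) (g : J → A) (e : J → M)
    (hf0 : ∀ i, f i ≠ 0) (hfd : ∀ i, f i ∈ 𝒜 (d i))
    (hg0 : ∀ j, g j ≠ 0) (hge : ∀ j, g j ∈ 𝒜 (e j))
    (hrel : IsRelevant 𝒜 f)
    (hdivclosed : {x : A | x ≠ 0 ∧ (∃ m, x ∈ 𝒜 m) ∧ ∃ i, x ∣ f i} = Set.range f)
    (χ : HomogeneousLocalization 𝒜 (Submonoid.closure (Set.range f)) →+*
        HomogeneousLocalization 𝒜 (Submonoid.closure (Set.range f ∪ Set.range g)))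
    (hχ : ∀ w, (χ w).val =
      locMap (Submonoid.closure_mono Set.subset_union_left) w.val)
    (n : J → ℕ) (hn : ∀ j, 0 < n j) (νp νm : J → I →₀ ℕ)
    (hdeg : ∀ j, n j • e j + ((νm j).sum fun i c => c • d i)
      = (νp j).sum fun i c => c • d i)
    (z : J → HomogeneousLocalization 𝒜 (Submonoid.closure (Set.range f)))
    (hz : ∀ j, (z j).val =
      Localization.mk (g j ^ n j * ∏ i ∈ (νm j).support, f i ^ (νm j) i)
        ⟨∏ i ∈ (νp j).support, f i ^ (νp j) i, prodPow_mem_closure f (νp j)⟩) :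
    ∀ w : HomogeneousLocalization 𝒜 (Submonoid.closure (Set.range f ∪ Set.range g)),
      ∃ (y : HomogeneousLocalization 𝒜 (Submonoid.closure (Set.range f)))
        (k : J →₀ ℕ), w * χ (∏ j ∈ k.support, z j ^ k j) = χ y := by
  intro w
  by_cases h0 : (0 : A) ∈ Submonoid.closure (Set.range f ∪ Set.range g)
  · have := HomogeneousLocalization.subsingleton 𝒜 h0
    exact ⟨0, 0, Subsingleton.elim _ _⟩
  obtain ⟨⟨m, ⟨a, ha⟩, ⟨t, htm⟩, ht⟩, rfl⟩ := HomogeneousLocalization.mk_surjective w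
  obtain ⟨k, δ, ε, c, s, h1, h2, h3, h4⟩ :=
    clear_denominator 𝒜 f d g e hfd hge n hn νp νm hdeg z hz t ht
  have ht0 : t ≠ 0 := by
    rintro rfl
    exact h0 ht
  obtain rfl : m = δ := DirectSum.degree_eq_of_mem_mem 𝒜 htm h1 ht0
  refine ⟨HomogeneousLocalization.mk
    ⟨m + ε, ⟨a * c, SetLike.mul_mem_graded ha h2⟩, ⟨s, h3⟩, s.2⟩, k, ?_⟩
  apply HomogeneousLocalization.val_injective
  change (_ * χ (k.prod fun j c => z j ^ c)).val = _
  rw [HomogeneousLocalization.val_mul, hχ, hχ, h4, HomogeneousLocalization.val_mk,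
    HomogeneousLocalization.val_mk, locMap_mk, locMap_mk, Localization.mk_mul,
    Localization.mk_eq_mk_iff, Localization.r_iff_exists]
  refine ⟨1, ?_⟩
  simp only [Submonoid.coe_mul, OneMemClass.coe_one]
  ring
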